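/- Let B = K_{3,3} be the complete bipartite graph with parts of size 3 and let P be the triangular prism, i.e., the box (Cartesian) product K₃ □ K₂ (both graphs have 6 vertices). Then both graphs are 3-regular, B is bipartite and triangle-free, P contains a triangle and is not bipartite, and for every message-passing scheme (any constant initial feature h₀, any functions AGG_t, MERGE_t), every number of iterations T, and every readout function READOUT : Multiset α → γ, the graph-level representations of B and P are equal. Consequently the standard GNN cannot identify bipartiteness or triangle-freeness. -/

import Mathlib

/-!
On a regular graph with constant initial features, message passing never separates two vertices:
if all features agree at iteration `t`, every vertex of a `d`-regular graph receives the same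
multiset (`d` copies of that feature), so all features agree at iteration `t + 1`. The common
value `regularFeat` depends on `d` and on the scheme, but not on the graph
(`gnnFeat_eq_regularFeat`), so the final multiset of features depends on the graph only
through `d` and the number of vertices. `K_{3,3}` and the prism are both 3-regular on 6 vertices,
while only the prism contains a triangle (an odd cycle, hence an obstruction to bipartiteness).
-/

open scoped Classical in
/-- The node features computed by a message-passing scheme (standard GNN) on a finite
simple graph `G`: `h 0 v = h₀` and
`h (t+1) v = MERGE (t+1) (h t v) (AGG (t+1) M_v)`, where `M_v` is the multiset of
features at iteration `t` of the neighbors of `v`. -/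
noncomputable def gnnFeat {V α β : Type*} [Fintype V] (G : SimpleGraph V)
    (h₀ : α) (AGG : ℕ → Multiset α → β) (MERGE : ℕ → α → β → α) : ℕ → V → α
  | 0, _ => h₀
  | t + 1, v =>
      MERGE (t + 1) (gnnFeat G h₀ AGG MERGE t v)
        (AGG (t + 1)
          (((Finset.univ.filter fun u => G.Adj v u)).val.map (gnnFeat G h₀ AGG MERGE t)))

/-- The feature shared by all vertices of a `d`-regular graph at each iteration of a
message-passing scheme, defined without reference to the graph. -/
def regularFeat {α β : Type*} (d : ℕ) (h₀ : α) (AGG : ℕ → Multiset α → β)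
    (MERGE : ℕ → α → β → α) : ℕ → α
  | 0 => h₀
  | t + 1 =>
      MERGE (t + 1) (regularFeat d h₀ AGG MERGE t)
        (AGG (t + 1) (Multiset.replicate d (regularFeat d h₀ AGG MERGE t)))

/-- Regularity is expressed by the cardinality of the neighbor filter, with an arbitrary
decidability instance, to match the filter in `gnnFeat`. -/
theorem gnnFeat_eq_regularFeat {V α β : Type*} [Fintype V] (G : SimpleGraph V) (d : ℕ)
    (hG : ∀ (v : V) [DecidablePred (G.Adj v)], (Finset.univ.filter fun u => G.Adj v u).card = d)
    (h₀ : α) (AGG : ℕ → Multiset α → β) (MERGE : ℕ → α → β → α) (t : ℕ) :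
    gnnFeat G h₀ AGG MERGE t = fun _ => regularFeat d h₀ AGG MERGE t := by
  induction t with
  | zero => rfl
  | succ t ih =>
    funext v
    simp only [gnnFeat, ih, regularFeat, Multiset.map_const', Finset.card_val, hG]

theorem card_filter_adj_of_isRegularOfDegree {V : Type*} [Fintype V] {G : SimpleGraph V}
    [G.LocallyFinite] {d : ℕ} (hG : G.IsRegularOfDegree d) (v : V) [DecidablePred (G.Adj v)] :
    (Finset.univ.filter fun u => G.Adj v u).card = d := by
  rw [← hG v, ← SimpleGraph.card_neighborFinset_eq_degree]
  congr 1
  ext u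
  simp

theorem isRegularOfDegree_completeBipartiteGraph
    [(completeBipartiteGraph (Fin 3) (Fin 3)).LocallyFinite] :
    (completeBipartiteGraph (Fin 3) (Fin 3)).IsRegularOfDegree 3 := by
  intro v
  rw [← SimpleGraph.card_neighborSet_eq_degree, ← Nat.card_eq_fintype_card]
  rcases v with a | a
  · have h : (completeBipartiteGraph (Fin 3) (Fin 3)).neighborSet (Sum.inl a) =
        Set.range Sum.inr := by
      ext (b | b) <;> simp
    rw [h, Nat.card_range_of_injective Sum.inr_injective, Nat.card_fin]
  · have h : (completeBipartiteGraph (Fin 3) (Fin 3)).neighborSet (Sum.inr a) =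
        Set.range Sum.inl := by
      ext (b | b) <;> simp
    rw [h, Nat.card_range_of_injective Sum.inl_injective, Nat.card_fin]

theorem isRegularOfDegree_prism
    [((⊤ : SimpleGraph (Fin 3)) □ (⊤ : SimpleGraph (Fin 2))).LocallyFinite] :
    ((⊤ : SimpleGraph (Fin 3)) □ (⊤ : SimpleGraph (Fin 2))).IsRegularOfDegree 3 := by
  intro v
  rw [SimpleGraph.degree_boxProd]
  simp

universe u v w

open scoped Classical in
/-- `B = K_{3,3}` and the triangular prism `P = K₃ □ K₂` are both 3-regular, `B` is
bipartite and triangle-free, `P` contains a triangle and is not bipartite, yet every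
standard GNN (any initial feature, aggregation/merge functions, number of iterations and
readout) assigns them the same graph-level representation: the standard GNN cannot
identify bipartiteness or triangle-freeness. -/
theorem gnn_cannot_identify_bipartiteness_or_triangle_freeness :
    let B : SimpleGraph (Fin 3 ⊕ Fin 3) := completeBipartiteGraph (Fin 3) (Fin 3)
    let P : SimpleGraph (Fin 3 × Fin 2) := (⊤ : SimpleGraph (Fin 3)) □ (⊤ : SimpleGraph (Fin 2))
    B.IsRegularOfDegree 3 ∧ P.IsRegularOfDegree 3 ∧
    (∃ s : Set (Fin 3 ⊕ Fin 3), ∀ a b, B.Adj a b → (a ∈ s ↔ b ∉ s)) ∧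
    B.CliqueFree 3 ∧
    ¬ P.CliqueFree 3 ∧
    ¬ (∃ s : Set (Fin 3 × Fin 2), ∀ a b, P.Adj a b → (a ∈ s ↔ b ∉ s)) ∧
    ∀ {α : Type u} {β : Type v} {γ : Type w} (h₀ : α) (AGG : ℕ → Multiset α → β)
      (MERGE : ℕ → α → β → α) (T : ℕ) (READOUT : Multiset α → γ),
      READOUT ((Finset.univ : Finset (Fin 3 ⊕ Fin 3)).val.map (gnnFeat B h₀ AGG MERGE T)) =
        READOUT ((Finset.univ : Finset (Fin 3 × Fin 2)).val.map (gnnFeat P h₀ AGG MERGE T)) := by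
  intro B P
  have hB : B.IsRegularOfDegree 3 := isRegularOfDegree_completeBipartiteGraph
  have hP : P.IsRegularOfDegree 3 := isRegularOfDegree_prism
  -- the triangle `K₃ × {0}` of the prism
  have h01 : P.Adj (0, 0) (1, 0) := by simp [P, SimpleGraph.boxProd_adj]
  have h02 : P.Adj (0, 0) (2, 0) := by simp [P, SimpleGraph.boxProd_adj]
  have h12 : P.Adj (1, 0) (2, 0) := by simp [P, SimpleGraph.boxProd_adj]
  refine ⟨hB, hP, ⟨Set.range Sum.inl, ?_⟩, ?_, ?_, ?_, ?_⟩
  · rintro (a | a) (b | b) <;> simp [B]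
  · intro s hs
    obtain ⟨a, b, c, hab, hac, hbc, -⟩ := SimpleGraph.is3Clique_iff.1 hs
    -- two of the three vertices lie in the same part
    rcases a with a | a <;> rcases b with b | b <;> rcases c with c | c <;>
      simp [B] at hab hac hbc
  · exact fun h => h _ (SimpleGraph.is3Clique_triple_iff.2 ⟨h01, h02, h12⟩)
  · rintro ⟨s, hs⟩
    have := hs _ _ h01
    have := hs _ _ h02
    have := hs _ _ h12
    tauto
  · intro α β γ h₀ AGG MERGE T READOUT
    rw [gnnFeat_eq_regularFeat B 3 (fun v => card_filter_adj_of_isRegularOfDegree hB v),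
      gnnFeat_eq_regularFeat P 3 (fun v => card_filter_adj_of_isRegularOfDegree hP v)]
    simp
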